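/- (Proposition 3.1, representation (3.6)) Let (D, F) be a good pair, X ⊆ ℝⁿ convex compact, A affine with A(X) ⊆ M, g ∈ ℝⁿ, and define 2Φ_*(r) = sup_{x,y∈X} inf_{φ∈F, α>0} Φ_r(x, y; φ, α). Then for every r ≥ 0, 2Φ_*(r) = max{ gᵀx − gᵀy : x, y ∈ X, AffH(A(x), A(y)) ≥ e^{−r} }, where AffH(μ, ν) = ∫_Ω √(p_μ(ω)·p_ν(ω)) P(dω) is the Hellinger affinity. -/

import Mathlib

open MeasureTheory Real Matrix Set
open scoped ENNReal

/-- A "good pair" `(𝒟, ℱ)` in the sense of Juditsky–Nemirovski: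
a parametric family of positive probability densities `p μ`, `μ ∈ M`, on `(Ω, P)`,
together with a finite-dimensional linear space `F` of Borel functions on `Ω`
containing the constants, such that log-likelihood ratios belong to `F` and
`μ ↦ ln ∫ e^{φ} p_μ dP` is well defined (finite, witnessed by integrability)
and concave on `M` for every `φ ∈ F`. -/
structure GoodPair (Ω : Type*) [MeasurableSpace Ω] (P : Measure Ω)
    (E : Type*) [NormedAddCommGroup E] [NormedSpace ℝ E] where
  M : Set E
  p : E → Ω → ℝ
  F : Submodule ℝ (Ω → ℝ)
  M_open : IsOpen M
  M_convex : Convex ℝ M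
  p_meas : ∀ μ ∈ M, Measurable (p μ)
  p_pos : ∀ μ ∈ M, ∀ ω, 0 < p μ ω
  p_prob : ∀ μ ∈ M, ∫ ω, p μ ω ∂P = 1
  F_fd : FiniteDimensional ℝ F
  F_meas : ∀ φ ∈ F, Measurable φ
  F_const : ∀ c : ℝ, (fun _ : Ω => c) ∈ F
  logratio_mem : ∀ μ ∈ M, ∀ ν ∈ M, (fun ω => Real.log (p μ ω / p ν ω)) ∈ F
  F_finite : ∀ φ ∈ F, ∀ μ ∈ M, Integrable (fun ω => Real.exp (φ ω) * p μ ω) P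
  F_concave : ∀ φ ∈ F,
    ConcaveOn ℝ M (fun μ => Real.log (∫ ω, Real.exp (φ ω) * p μ ω ∂P))

variable {Ω : Type*} [MeasurableSpace Ω] {P : Measure Ω}
  {E : Type*} [NormedAddCommGroup E] [NormedSpace ℝ E] {n : ℕ}

/-- The distribution of the observation when the parameter is `μ`:
the measure with density `p μ` with respect to `P`. -/
noncomputable def obsMeasure (D : GoodPair Ω P E) (μ : E) : Measure Ω :=
  P.withDensity fun ω => ENNReal.ofReal (D.p μ ω)

/-- The `ε`-risk of an estimate `ghat` of the linear form `gᵀx`, `x ∈ X`: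
`inf {δ | sup_{x ∈ X} Prob_{ω ∼ p_{A(x)}·P} {|ghat ω - gᵀx| > δ} < ε}`. -/
noncomputable def Risk (D : GoodPair Ω P E) (A : (Fin n → ℝ) →ᵃ[ℝ] E)
    (g : Fin n → ℝ) (X : Set (Fin n → ℝ)) (ghat : Ω → ℝ) (ε : ℝ) : ℝ :=
  sInf {δ : ℝ |
    (⨆ x ∈ X, obsMeasure D (A x) {ω | δ < |ghat ω - g ⬝ᵥ x|}) < ENNReal.ofReal ε}

/-- The minimax optimal `ε`-risk over all (Borel) estimates. -/
noncomputable def RiskStar (D : GoodPair Ω P E) (A : (Fin n → ℝ) →ᵃ[ℝ] E)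
    (g : Fin n → ℝ) (X : Set (Fin n → ℝ)) (ε : ℝ) : ℝ :=
  sInf {ρ : ℝ | ∃ ghat : Ω → ℝ, Measurable ghat ∧ ρ = Risk D A g X ghat ε}

/-- The minimax optimal `ε`-risk over affine estimates, i.e. estimates `φ ∈ F`. -/
noncomputable def RiskAff (D : GoodPair Ω P E) (A : (Fin n → ℝ) →ᵃ[ℝ] E)
    (g : Fin n → ℝ) (X : Set (Fin n → ℝ)) (ε : ℝ) : ℝ :=
  sInf {ρ : ℝ | ∃ φ ∈ D.F, ρ = Risk D A g X φ ε}

/-- The function `Φ_r(x, y; φ, α)`. -/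
noncomputable def PhiFun (D : GoodPair Ω P E) (A : (Fin n → ℝ) →ᵃ[ℝ] E)
    (g : Fin n → ℝ) (r : ℝ) (x y : Fin n → ℝ) (φ : Ω → ℝ) (α : ℝ) : ℝ :=
  g ⬝ᵥ x - g ⬝ᵥ y
    + α * Real.log (∫ ω, Real.exp (φ ω / α) * D.p (A y) ω ∂P)
    + α * Real.log (∫ ω, Real.exp (-φ ω / α) * D.p (A x) ω ∂P)
    + 2 * α * r

/-- `Φ_*(r)` defined through the sup-inf value:
`2Φ_*(r) = sup_{x,y ∈ X} inf_{φ ∈ F, α > 0} Φ_r(x, y; φ, α)`. -/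
noncomputable def PhiStarSI (D : GoodPair Ω P E) (A : (Fin n → ℝ) →ᵃ[ℝ] E)
    (g : Fin n → ℝ) (X : Set (Fin n → ℝ)) (r : ℝ) : ℝ :=
  (1/2) * sSup {v : ℝ | ∃ x ∈ X, ∃ y ∈ X,
    v = sInf {w : ℝ | ∃ φ ∈ D.F, ∃ α : ℝ, 0 < α ∧ w = PhiFun D A g r x y φ α}}

/-- `Φ_*(r)` defined through the inf-sup value:
`2Φ_*(r) = inf_{φ ∈ F, α > 0} sup_{x,y ∈ X} Φ_r(x, y; φ, α)`. -/
noncomputable def PhiStarIS (D : GoodPair Ω P E) (A : (Fin n → ℝ) →ᵃ[ℝ] E)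
    (g : Fin n → ℝ) (X : Set (Fin n → ℝ)) (r : ℝ) : ℝ :=
  (1/2) * sInf {v : ℝ | ∃ φ ∈ D.F, ∃ α : ℝ, 0 < α ∧
    v = sSup {w : ℝ | ∃ x ∈ X, ∃ y ∈ X, w = PhiFun D A g r x y φ α}}

/-- The Hellinger affinity `AffH(μ, ν) = ∫_Ω √(p_μ p_ν) dP`. -/
noncomputable def AffH (D : GoodPair Ω P E) (μ ν : E) : ℝ :=
  ∫ ω, Real.sqrt (D.p μ ω * D.p ν ω) ∂P

/-! The half log-likelihood ratio minimises, over `φ ∈ F`, the sum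
`log ∫ e^φ p_ν dP + log ∫ e^{-φ} p_μ dP`, with minimum `2 log AffH(μ, ν)`; the lower bound is
Cauchy–Schwarz. After rescaling `φ` by `α`, minimising `Φ_r(x, y; φ, α)` over `φ` thus leaves
`gᵀx - gᵀy + 2α (log AffH(A x, A y) + r)`, whose infimum over `α > 0` is `gᵀx - gᵀy` if
`AffH(A x, A y) ≥ e^{-r}` and `-∞` otherwise. As a minimum of jointly concave functions,
`log AffH` is jointly concave; so it is continuous along `A`, and the maximum over the compact
set of admissible pairs is attained. -/

theorem isGLB_image_add_mul_Ioi {c : ℝ} (hc : 0 ≤ c) (d : ℝ) :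
    IsGLB ((fun t : ℝ => d + t * c) '' Ioi 0) d := by
  refine IsGLB.isGLB_of_tendsto (fun s _ t _ hst => by gcongr) isGLB_Ioi nonempty_Ioi ?_
  have hcont : Continuous fun t : ℝ => d + t * c := by fun_prop
  simpa using (hcont.tendsto 0).mono_left nhdsWithin_le_nhds

theorem not_bddBelow_image_add_mul_Ioi {c : ℝ} (hc : c < 0) (d : ℝ) :
    ¬BddBelow ((fun t : ℝ => d + t * c) '' Ioi 0) := by
  rintro ⟨b, hb⟩
  have htendsto : Filter.Tendsto (fun t : ℝ => d + t * c) Filter.atTop Filter.atBot :=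
    Filter.tendsto_atBot_add_const_left _ d (Filter.tendsto_id.atTop_mul_const_of_neg hc)
  obtain ⟨t, htb, ht⟩ :=
    ((htendsto.eventually_lt_atBot b).and (Filter.eventually_gt_atTop 0)).exists
  exact htb.not_ge (hb ⟨t, ht, rfl⟩)

theorem concaveOn_of_isLeast {𝕜 V β ι : Type*} [Semiring 𝕜] [PartialOrder 𝕜] [AddCommMonoid V]
    [SMul 𝕜 V] [AddCommMonoid β] [PartialOrder β] [IsOrderedAddMonoid β] [SMulWithZero 𝕜 β]
    [PosSMulMono 𝕜 β] {s : Set V} {I : Set ι} {F : ι → V → β} {f : V → β} (hs : Convex 𝕜 s)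
    (hF : ∀ i ∈ I, ConcaveOn 𝕜 s (F i))
    (hf : ∀ v ∈ s, IsLeast ((fun i => F i v) '' I) (f v)) : ConcaveOn 𝕜 s f := by
  refine ⟨hs, fun v hv w hw a b ha hb hab => ?_⟩
  obtain ⟨i, hi, hmin⟩ := (hf _ (hs hv hw ha hb hab)).1
  calc a • f v + b • f w ≤ a • F i v + b • F i w := by
        gcongr
        exacts [(hf v hv).2 ⟨i, hi, rfl⟩, (hf w hw).2 ⟨i, hi, rfl⟩]
    _ ≤ F i (a • v + b • w) := (hF i hi).2 hv hw ha hb hab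
    _ = f (a • v + b • w) := hmin

theorem integral_sqrt_mul_le_sqrt_mul_integral {f g : Ω → ℝ} (hf : Integrable f P)
    (hg : Integrable g P) (hf0 : 0 ≤ᵐ[P] f) (hg0 : 0 ≤ᵐ[P] g) :
    ∫ ω, √(f ω * g ω) ∂P ≤ √((∫ ω, f ω ∂P) * ∫ ω, g ω ∂P) := by
  have sq_sqrt_ae {h : Ω → ℝ} (hh0 : 0 ≤ᵐ[P] h) : (fun ω => √(h ω) ^ 2) =ᵐ[P] h :=
    hh0.mono fun _ => Real.sq_sqrt
  have memLp_sqrt {h : Ω → ℝ} (hh : Integrable h P) (hh0 : 0 ≤ᵐ[P] h) :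
      MemLp (fun ω => √(h ω)) (ENNReal.ofReal 2) P := by
    rw [ENNReal.ofReal_ofNat,
      memLp_two_iff_integrable_sq hh.1.aemeasurable.sqrt.aestronglyMeasurable]
    exact hh.congr (sq_sqrt_ae hh0).symm
  have hsqrt_mul : (fun ω => √(f ω * g ω)) =ᵐ[P] fun ω => √(f ω) * √(g ω) :=
    hf0.mono fun _ h => Real.sqrt_mul h _
  have hCS := integral_mul_le_Lp_mul_Lq_of_nonneg Real.HolderConjugate.two_two
    (ae_of_all P fun ω => Real.sqrt_nonneg (f ω)) (ae_of_all P fun ω => Real.sqrt_nonneg (g ω))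
    (memLp_sqrt hf hf0) (memLp_sqrt hg hg0)
  simpa only [Real.rpow_two, integral_congr_ae (sq_sqrt_ae hf0), integral_congr_ae (sq_sqrt_ae hg0),
    ← Real.sqrt_eq_rpow, ← Real.sqrt_mul (integral_nonneg_of_ae hf0),
    ← integral_congr_ae hsqrt_mul] using hCS

namespace GoodPair

variable (D : GoodPair Ω P E) {μ ν : E} {φ : Ω → ℝ}

/-- The logarithmic moment generating function `log ∫ e^φ p_μ dP` of `φ` under the density
`p_μ`, as a function of the parameter `μ`. -/
noncomputable def logMGF (φ : Ω → ℝ) (μ : E) : ℝ :=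
  Real.log (∫ ω, Real.exp (φ ω) * D.p μ ω ∂P)

/-- Half the log-likelihood ratio of `p_μ` to `p_ν`, the optimal `φ` in the inner problem:
`e^φ p_ν` and `e^{-φ} p_μ` both equal the geometric mean `√(p_μ p_ν)`. -/
noncomputable def halfLogRatio (μ ν : E) (ω : Ω) : ℝ :=
  Real.log (D.p μ ω / D.p ν ω) / 2

theorem integral_exp_mul_pos (hφ : φ ∈ D.F) (hμ : μ ∈ D.M) :
    0 < ∫ ω, Real.exp (φ ω) * D.p μ ω ∂P := by
  have : NeZero P := ⟨by rintro rfl; simpa using D.p_prob μ hμ⟩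
  have hexp (ω : Ω) :
      Real.exp (φ ω) * D.p μ ω = Real.exp (φ ω + Real.log (D.p μ ω)) := by
    rw [Real.exp_add, Real.exp_log (D.p_pos μ hμ ω)]
  simpa only [hexp] using integral_exp_pos (by simpa only [hexp] using D.F_finite φ hφ μ hμ)

theorem halfLogRatio_mem (hμ : μ ∈ D.M) (hν : ν ∈ D.M) : D.halfLogRatio μ ν ∈ D.F := by
  convert D.F.smul_mem (2⁻¹ : ℝ) (D.logratio_mem μ hμ ν hν) using 1
  ext ω
  exact div_eq_inv_mul _ _

theorem neg_halfLogRatio (μ ν : E) : -D.halfLogRatio μ ν = D.halfLogRatio ν μ := by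
  ext ω
  rw [Pi.neg_apply, halfLogRatio, halfLogRatio, ← inv_div (D.p μ ω), Real.log_inv, neg_div]

theorem exp_halfLogRatio_mul (hμ : μ ∈ D.M) (hν : ν ∈ D.M) (ω : Ω) :
    Real.exp (D.halfLogRatio μ ν ω) * D.p ν ω = √(D.p μ ω * D.p ν ω) := by
  have hp := D.p_pos μ hμ ω
  have hq := D.p_pos ν hν ω
  rw [halfLogRatio, ← Real.log_sqrt (by positivity), Real.exp_log (by positivity),
    Real.sqrt_div hp.le, Real.sqrt_mul hp.le, div_mul_eq_mul_div, mul_div_assoc, Real.div_sqrt]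

theorem affH_comm (μ ν : E) : AffH D μ ν = AffH D ν μ := by
  simp only [AffH, mul_comm]

theorem affH_self (hμ : μ ∈ D.M) : AffH D μ μ = 1 := by
  simpa only [AffH, Real.sqrt_mul_self (D.p_pos μ hμ _).le] using D.p_prob μ hμ

theorem affH_eq_integral_exp_halfLogRatio (hμ : μ ∈ D.M) (hν : ν ∈ D.M) :
    AffH D μ ν = ∫ ω, Real.exp (D.halfLogRatio μ ν ω) * D.p ν ω ∂P := by
  simp only [AffH, D.exp_halfLogRatio_mul hμ hν]

theorem affH_pos (hμ : μ ∈ D.M) (hν : ν ∈ D.M) : 0 < AffH D μ ν := by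
  rw [D.affH_eq_integral_exp_halfLogRatio hμ hν]
  exact D.integral_exp_mul_pos (D.halfLogRatio_mem hμ hν) hν

theorem exp_neg_le_affH_iff (hμ : μ ∈ D.M) (hν : ν ∈ D.M) (r : ℝ) :
    Real.exp (-r) ≤ AffH D μ ν ↔ 0 ≤ Real.log (AffH D μ ν) + r := by
  rw [← Real.le_log_iff_exp_le (D.affH_pos hμ hν), neg_le_iff_add_nonneg]

theorem logMGF_halfLogRatio (hμ : μ ∈ D.M) (hν : ν ∈ D.M) :
    D.logMGF (D.halfLogRatio μ ν) ν = Real.log (AffH D μ ν) := by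
  rw [logMGF, D.affH_eq_integral_exp_halfLogRatio hμ hν]

theorem two_mul_log_affH_le (hφ : φ ∈ D.F) (hμ : μ ∈ D.M) (hν : ν ∈ D.M) :
    2 * Real.log (AffH D μ ν) ≤ D.logMGF φ ν + D.logMGF (-φ) μ := by
  have hφ' : -φ ∈ D.F := D.F.neg_mem hφ
  have hν_pos := D.integral_exp_mul_pos hφ hν
  have hμ_pos := D.integral_exp_mul_pos hφ' hμ
  have hcancel (ω : Ω) : D.p μ ω * D.p ν ω =
      Real.exp (φ ω) * D.p ν ω * (Real.exp ((-φ) ω) * D.p μ ω) := by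
    rw [Pi.neg_apply, Real.exp_neg]
    field_simp
  have hCS : AffH D μ ν ≤
      √((∫ ω, Real.exp (φ ω) * D.p ν ω ∂P) * ∫ ω, Real.exp ((-φ) ω) * D.p μ ω ∂P) := by
    simp only [AffH, hcancel]
    exact integral_sqrt_mul_le_sqrt_mul_integral (D.F_finite φ hφ ν hν) (D.F_finite _ hφ' μ hμ)
      (ae_of_all P fun ω => mul_nonneg (Real.exp_nonneg _) (D.p_pos ν hν ω).le)
      (ae_of_all P fun ω => mul_nonneg (Real.exp_nonneg _) (D.p_pos μ hμ ω).le)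
  have hlog := Real.log_le_log (D.affH_pos hμ hν) hCS
  rw [Real.log_sqrt (by positivity), Real.log_mul hν_pos.ne' hμ_pos.ne'] at hlog
  simp only [logMGF]
  linarith

theorem isLeast_logMGF_add_logMGF_neg (hμ : μ ∈ D.M) (hν : ν ∈ D.M) :
    IsLeast ((fun φ => D.logMGF φ ν + D.logMGF (-φ) μ) '' D.F)
      (2 * Real.log (AffH D μ ν)) := by
  refine ⟨⟨D.halfLogRatio μ ν, D.halfLogRatio_mem hμ hν, ?_⟩, ?_⟩
  · simp only [D.neg_halfLogRatio, D.logMGF_halfLogRatio hμ hν, D.logMGF_halfLogRatio hν hμ,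
      D.affH_comm ν μ, two_mul]
  · rintro _ ⟨φ, hφ, rfl⟩
    exact D.two_mul_log_affH_le hφ hμ hν

theorem concaveOn_log_affH :
    ConcaveOn ℝ (D.M ×ˢ D.M) fun z : E × E => Real.log (AffH D z.1 z.2) := by
  have hM : Convex ℝ (D.M ×ˢ D.M) := D.M_convex.prod D.M_convex
  have htwo : ConcaveOn ℝ (D.M ×ˢ D.M) fun z : E × E => 2 * Real.log (AffH D z.1 z.2) := by
    refine concaveOn_of_isLeast (F := fun φ z => D.logMGF φ z.2 + D.logMGF (-φ) z.1) hM
      (fun φ hφ => ?_) fun z hz => D.isLeast_logMGF_add_logMGF_neg hz.1 hz.2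
    have hsnd := (D.F_concave φ hφ).comp_linearMap (LinearMap.snd ℝ E E)
    have hfst := (D.F_concave (-φ) (D.F.neg_mem hφ)).comp_linearMap (LinearMap.fst ℝ E E)
    exact (hsnd.subset (fun z hz => hz.2) hM).add (hfst.subset (fun z hz => hz.1) hM)
  simpa only [smul_eq_mul, inv_mul_cancel_left₀ (two_ne_zero' ℝ)] using
    htwo.smul (by positivity : (0 : ℝ) ≤ 2⁻¹)

/-- The pairs of signals in `X` whose observation laws have Hellinger affinity at least `e^{-r}`:
the feasible set of the modulus of continuity. -/
def affinityPairs {V : Type*} [AddCommGroup V] [Module ℝ V] (A : V →ᵃ[ℝ] E) (X : Set V)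
    (r : ℝ) : Set (V × V) :=
  {z ∈ X ×ˢ X | Real.exp (-r) ≤ AffH D (A z.1) (A z.2)}

theorem diag_mem_affinityPairs {V : Type*} [AddCommGroup V] [Module ℝ V] {A : V →ᵃ[ℝ] E}
    {X : Set V} {x : V} (hx : x ∈ X) (hAx : A x ∈ D.M) {r : ℝ} (hr : 0 ≤ r) :
    (x, x) ∈ D.affinityPairs A X r :=
  ⟨⟨hx, hx⟩, by simpa only [D.affH_self hAx, Real.exp_le_one_iff, neg_nonpos] using hr⟩

section

variable {V : Type*} [NormedAddCommGroup V] [NormedSpace ℝ V] [FiniteDimensional ℝ V]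

theorem continuousOn_log_affH_comp (A : V →ᵃ[ℝ] E) :
    ContinuousOn (fun z : V × V => Real.log (AffH D (A z.1) (A z.2)))
      ((A ⁻¹' D.M) ×ˢ (A ⁻¹' D.M)) := by
  have hopen : IsOpen (A ⁻¹' D.M) := D.M_open.preimage A.continuous_of_finiteDimensional
  exact (D.concaveOn_log_affH.comp_affineMap (A.prodMap A)).continuousOn (hopen.prod hopen)

theorem isCompact_affinityPairs {A : V →ᵃ[ℝ] E} {X : Set V}
    (hX : IsCompact X) (hA : MapsTo A X D.M) (r : ℝ) : IsCompact (D.affinityPairs A X r) := by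
  have hcont : ContinuousOn (fun z : V × V => Real.log (AffH D (A z.1) (A z.2)) + r) (X ×ˢ X) :=
    ((D.continuousOn_log_affH_comp A).mono (prod_mono hA hA)).add continuousOn_const
  have hclosed := hcont.preimage_isClosed_of_isClosed (hX.prod hX).isClosed (isClosed_Ici (a := 0))
  convert (hX.prod hX).of_isClosed_subset hclosed inter_subset_left using 1
  ext z
  exact and_congr_right fun hz => D.exp_neg_le_affH_iff (hA hz.1) (hA hz.2) r

end

/-- The values `Φ_r(x, y; φ, α)` over `φ ∈ F` and `α > 0`, whose infimum is the inner problem in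
the definition of `Φ_*(r)`. -/
def phiValues (A : (Fin n → ℝ) →ᵃ[ℝ] E) (g : Fin n → ℝ) (r : ℝ) (x y : Fin n → ℝ) : Set ℝ :=
  {w : ℝ | ∃ φ ∈ D.F, ∃ α : ℝ, 0 < α ∧ w = PhiFun D A g r x y φ α}

variable {A : (Fin n → ℝ) →ᵃ[ℝ] E} {x y : Fin n → ℝ}

theorem phiFun_smul (A : (Fin n → ℝ) →ᵃ[ℝ] E) (g : Fin n → ℝ) (r : ℝ) (x y : Fin n → ℝ)
    (φ : Ω → ℝ) {α : ℝ} (hα : α ≠ 0) :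
    PhiFun D A g r x y (α • φ) α =
      g ⬝ᵥ x - g ⬝ᵥ y + α * (D.logMGF φ (A y) + D.logMGF (-φ) (A x) + 2 * r) := by
  simp only [PhiFun, logMGF, Pi.smul_apply, Pi.neg_apply, smul_eq_mul, neg_div,
    mul_div_cancel_left₀ _ hα]
  ring

theorem isLeast_phiFun (g : Fin n → ℝ) (r : ℝ) (hx : A x ∈ D.M) (hy : A y ∈ D.M) {α : ℝ}
    (hα : 0 < α) :
    IsLeast ((fun φ => PhiFun D A g r x y φ α) '' D.F)
      (g ⬝ᵥ x - g ⬝ᵥ y + α * (2 * (Real.log (AffH D (A x) (A y)) + r))) := by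
  obtain ⟨⟨φ₀, hφ₀, hmin⟩, hle⟩ := D.isLeast_logMGF_add_logMGF_neg hx hy
  refine ⟨⟨α • φ₀, D.F.smul_mem α hφ₀, ?_⟩, ?_⟩
  · simp only [D.phiFun_smul A g r x y φ₀ hα.ne', hmin]
    ring
  · rintro _ ⟨φ, hφ, rfl⟩
    have hbound := hle ⟨α⁻¹ • φ, D.F.smul_mem α⁻¹ hφ, rfl⟩
    have hscale := D.phiFun_smul A g r x y (α⁻¹ • φ) hα.ne'
    rw [smul_inv_smul₀ hα.ne'] at hscale
    simp only [hscale]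
    gcongr
    exact (mul_add 2 _ r).trans_le (by gcongr)

theorem lowerBounds_phiValues (g : Fin n → ℝ) (r : ℝ) (hx : A x ∈ D.M) (hy : A y ∈ D.M) :
    lowerBounds (D.phiValues A g r x y) = lowerBounds ((fun α : ℝ =>
      g ⬝ᵥ x - g ⬝ᵥ y + α * (2 * (Real.log (AffH D (A x) (A y)) + r))) '' Ioi 0) := by
  ext b
  constructor
  · rintro hb _ ⟨α, hα, rfl⟩
    obtain ⟨φ, hφ, hmin⟩ := (D.isLeast_phiFun g r hx hy hα).1
    exact hb ⟨φ, hφ, α, hα, hmin.symm⟩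
  · rintro hb _ ⟨φ, hφ, α, hα, rfl⟩
    exact (hb ⟨α, hα, rfl⟩).trans ((D.isLeast_phiFun g r hx hy hα).2 ⟨φ, hφ, rfl⟩)

theorem sInf_phiValues_of_le (g : Fin n → ℝ) {r : ℝ} (hx : A x ∈ D.M) (hy : A y ∈ D.M)
    (h : Real.exp (-r) ≤ AffH D (A x) (A y)) :
    sInf (D.phiValues A g r x y) = g ⬝ᵥ x - g ⬝ᵥ y := by
  have hc := (D.exp_neg_le_affH_iff hx hy r).1 h
  have hglb : IsGLB (D.phiValues A g r x y) (g ⬝ᵥ x - g ⬝ᵥ y) := by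
    rw [IsGLB, D.lowerBounds_phiValues g r hx hy]
    exact isGLB_image_add_mul_Ioi (by positivity) _
  exact hglb.csInf_eq ⟨_, 0, D.F.zero_mem, 1, one_pos, rfl⟩

theorem sInf_phiValues_of_lt (g : Fin n → ℝ) {r : ℝ} (hx : A x ∈ D.M) (hy : A y ∈ D.M)
    (h : AffH D (A x) (A y) < Real.exp (-r)) : sInf (D.phiValues A g r x y) = 0 := by
  have hc : Real.log (AffH D (A x) (A y)) + r < 0 :=
    not_le.1 (mt (D.exp_neg_le_affH_iff hx hy r).2 h.not_ge)
  refine Real.sInf_of_not_bddBelow ?_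
  rw [BddBelow, D.lowerBounds_phiValues g r hx hy]
  exact not_bddBelow_image_add_mul_Ioi (by linarith) _

/-- On a pair outside `affinityPairs` the infimum is `-∞` and `sInf` takes the junk value `0`. This
does not change the supremum: for `r ≥ 0` a diagonal pair is feasible and has value `0` too. -/
theorem two_mul_phiStarSI_eq_sSup {X : Set (Fin n → ℝ)} (hA : MapsTo A X D.M) (g : Fin n → ℝ)
    {r : ℝ} (hr : 0 ≤ r) :
    2 * PhiStarSI D A g X r = sSup ((fun z => g ⬝ᵥ z.1 - g ⬝ᵥ z.2) '' D.affinityPairs A X r) := by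
  rw [PhiStarSI, ← mul_assoc, mul_one_div_cancel two_ne_zero, one_mul]
  congr 1
  ext v
  constructor
  · rintro ⟨x, hx, y, hy, rfl⟩
    rcases le_or_gt (Real.exp (-r)) (AffH D (A x) (A y)) with h | h
    · exact ⟨(x, y), ⟨⟨hx, hy⟩, h⟩, (D.sInf_phiValues_of_le g (hA hx) (hA hy) h).symm⟩
    · exact ⟨(x, x), D.diag_mem_affinityPairs hx (hA hx) hr,
        (sub_self _).trans (D.sInf_phiValues_of_lt g (hA hx) (hA hy) h).symm⟩
  · rintro ⟨⟨x, y⟩, ⟨⟨hx, hy⟩, h⟩, rfl⟩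
    exact ⟨x, hx, y, hy, (D.sInf_phiValues_of_le g (hA hx) (hA hy) h).symm⟩

end GoodPair

theorem phiStar_eq_hellinger_modulus_general (D : GoodPair Ω P E) {X : Set (Fin n → ℝ)}
    (hXne : X.Nonempty) (hXcp : IsCompact X) {A : (Fin n → ℝ) →ᵃ[ℝ] E} (hA : ∀ x ∈ X, A x ∈ D.M)
    (g : Fin n → ℝ) {r : ℝ} (hr : 0 ≤ r) :
    IsGreatest
      {v : ℝ | ∃ x ∈ X, ∃ y ∈ X,
        Real.exp (-r) ≤ AffH D (A x) (A y) ∧ v = g ⬝ᵥ x - g ⬝ᵥ y}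
      (2 * PhiStarSI D A g X r) := by
  have himage : {v : ℝ | ∃ x ∈ X, ∃ y ∈ X,
      Real.exp (-r) ≤ AffH D (A x) (A y) ∧ v = g ⬝ᵥ x - g ⬝ᵥ y} =
      (fun z => g ⬝ᵥ z.1 - g ⬝ᵥ z.2) '' D.affinityPairs A X r := by
    ext v
    constructor
    · rintro ⟨x, hx, y, hy, h, rfl⟩
      exact ⟨(x, y), ⟨⟨hx, hy⟩, h⟩, rfl⟩
    · rintro ⟨⟨x, y⟩, ⟨⟨hx, hy⟩, h⟩, rfl⟩
      exact ⟨x, hx, y, hy, h, rfl⟩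
  have hcont : Continuous fun z : (Fin n → ℝ) × (Fin n → ℝ) => g ⬝ᵥ z.1 - g ⬝ᵥ z.2 := by
    fun_prop
  obtain ⟨x, hx⟩ := hXne
  rw [himage, D.two_mul_phiStarSI_eq_sSup hA g hr]
  exact ((D.isCompact_affinityPairs hXcp hA r).image hcont).isGreatest_sSup
    ⟨_, (x, x), D.diag_mem_affinityPairs hx (hA x hx) hr, rfl⟩

/-- **Proposition 3.1, representation (3.6).** For every `r ≥ 0`,
`2Φ_*(r) = max { gᵀx − gᵀy : x, y ∈ X, AffH(A(x), A(y)) ≥ e^{−r} }`, where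
`2Φ_*(r) = sup_{x,y∈X} inf_{φ∈F, α>0} Φ_r(x,y;φ,α)`. -/
theorem phiStar_eq_hellinger_modulus
    {Ω : Type*} [MeasurableSpace Ω] [TopologicalSpace Ω] [PolishSpace Ω] [BorelSpace Ω]
    {P : Measure Ω} [SigmaFinite P] {m n : ℕ}
    (D : GoodPair Ω P (Fin m → ℝ))
    (X : Set (Fin n → ℝ)) (hXne : X.Nonempty) (hXcp : IsCompact X) (hXcv : Convex ℝ X)
    (A : (Fin n → ℝ) →ᵃ[ℝ] (Fin m → ℝ)) (hA : ∀ x ∈ X, A x ∈ D.M)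
    (g : Fin n → ℝ) (r : ℝ) (hr : 0 ≤ r) :
    IsGreatest
      {v : ℝ | ∃ x ∈ X, ∃ y ∈ X,
        Real.exp (-r) ≤ AffH D (A x) (A y) ∧ v = g ⬝ᵥ x - g ⬝ᵥ y}
      (2 * PhiStarSI D A g X r) :=
  phiStar_eq_hellinger_modulus_general D hXne hXcp hA g hr
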